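/- (Shearer's Lemma) Let I be a finite index set, let X = (X_i : i ∈ I) be a random variable where each X_i takes values in a finite set, and let A_1, …, A_m be (not necessarily distinct) subsets of I such that every i ∈ I belongs to at least q of the sets A_j, for an integer q ≥ 1. For B ⊆ I write X_B = (X_i : i ∈ B). Then ∑_{j=1}^m h[X_{A_j}] ≥ q · h[X]. -/

import Mathlib

/-!
Write `P_f(ω)` for the probability that `f` takes the value `f ω`. Grouping outcomes by their value
gives `h[f] = -∑ ω, p ω * log₂ P_f(ω)`, so entropy depends on `f` only through the partition of `Ω`
into its fibres. In this form:

* monotonicity (`entropy_mono`) holds because finer partitions have smaller cells;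
* submodularity (`entropy_submodular`) follows from `log x ≤ x - 1`, applied to
  `x = P_f P_g / (P_u P_w)`, once the expectation of `x` is known to be at most `1`
  (`sum_ratio_le_one`).

For `S ⊆ ι`, `q * h[X_S] ≤ ∑ j, h[X_{A j ∩ S}]` is shown by induction on `S`
(`shearer_restrict`). Adjoining `i` to `S` raises the left side by `q` times
`h[X_{S ∪ {i}}] - h[X_S] ≥ 0`. On the right it raises each of the at least `q` terms with `i ∈ A j`
by at least this increment, by submodularity, and leaves the others unchanged.
-/

open Finset

/-- The base-2 Shannon entropy of the random variable `f` on the finite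
probability space `(Ω, p)`. -/
noncomputable def entropy {Ω β : Type*} [Fintype Ω] [DecidableEq β]
    (p : Ω → ℝ) (f : Ω → β) : ℝ :=
  -∑ b ∈ Finset.univ.image f,
      (∑ ω ∈ Finset.univ.filter (fun ω => f ω = b), p ω) *
        Real.logb 2 (∑ ω ∈ Finset.univ.filter (fun ω => f ω = b), p ω)

/-- The probability that `f` takes the value `f ω`, i.e. the mass of the fibre of `f` through `ω`. -/
noncomputable def fibreMass {Ω β : Type*} [Fintype Ω] [DecidableEq β]
    (p : Ω → ℝ) (f : Ω → β) (ω : Ω) : ℝ :=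
  ∑ ω' ∈ Finset.univ.filter (fun ω' => f ω' = f ω), p ω'

section Fibres

variable {Ω α β γ δ : Type*} [Fintype Ω] [DecidableEq α] [DecidableEq β] [DecidableEq γ]
  [DecidableEq δ] {p : Ω → ℝ}

theorem entropy_eq_sum (p : Ω → ℝ) (f : Ω → β) :
    entropy p f = -∑ ω, p ω * Real.logb 2 (fibreMass p f ω) := by
  unfold entropy
  congr 1
  rw [← Finset.sum_fiberwise_of_maps_to (s := Finset.univ) (t := Finset.univ.image f) (g := f)
    (fun ω _ => Finset.mem_image_of_mem f (Finset.mem_univ ω))]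
  refine Finset.sum_congr rfl fun b _ => ?_
  rw [Finset.sum_mul]
  refine Finset.sum_congr rfl fun ω hω => ?_
  have h : f ω = b := (Finset.mem_filter.mp hω).2
  rw [fibreMass, h]

theorem fibreMass_nonneg (hp0 : ∀ ω, 0 ≤ p ω) (f : Ω → β) (ω : Ω) : 0 ≤ fibreMass p f ω :=
  Finset.sum_nonneg fun ω' _ => hp0 ω'

theorem le_fibreMass (hp0 : ∀ ω, 0 ≤ p ω) (f : Ω → β) (ω : Ω) : p ω ≤ fibreMass p f ω :=
  Finset.single_le_sum (f := p) (fun ω' _ => hp0 ω') (by simp)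

theorem fibreMass_mono (hp0 : ∀ ω, 0 ≤ p ω) {f : Ω → α} {u : Ω → γ}
    (h : ∀ a b, u a = u b → f a = f b) (ω : Ω) : fibreMass p u ω ≤ fibreMass p f ω := by
  refine Finset.sum_le_sum_of_subset_of_nonneg (fun a ha => ?_) fun a _ _ => hp0 a
  simp only [Finset.mem_filter, Finset.mem_univ, true_and] at ha ⊢
  exact h _ _ ha

theorem fibreMass_congr {f : Ω → α} {a b : Ω} (h : f a = f b) :
    fibreMass p f a = fibreMass p f b := by
  rw [fibreMass, fibreMass, h]

/-- Entropy does not decrease when passing from `f` to a variable `u` that determines it. -/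
theorem entropy_mono (hp0 : ∀ ω, 0 ≤ p ω) {f : Ω → α} {u : Ω → γ}
    (h : ∀ a b, u a = u b → f a = f b) : entropy p f ≤ entropy p u := by
  rw [entropy_eq_sum, entropy_eq_sum, neg_le_neg_iff]
  refine Finset.sum_le_sum fun ω _ => ?_
  rcases (hp0 ω).eq_or_lt with h0 | h0
  · simp [← h0]
  · exact mul_le_mul_of_nonneg_left (Real.logb_le_logb_of_le (by norm_num)
      (h0.trans_le (le_fibreMass hp0 u ω)) (fibreMass_mono hp0 h ω)) h0.le

/-- The conditional weights `p ω / P_u(ω)` sum to at most `1` over a set of outcomes on which `u`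
is constant. On a null
fibre the quotients are `0`, so the sum need not be `1` even over a full fibre. -/
theorem sum_div_fibreMass_le_one (hp0 : ∀ ω, 0 ≤ p ω) (u : Ω → γ) (s : Finset Ω)
    (hs : ∀ a ∈ s, ∀ b ∈ s, u a = u b) : ∑ ω ∈ s, p ω / fibreMass p u ω ≤ 1 := by
  rcases s.eq_empty_or_nonempty with rfl | ⟨c, hc⟩
  · simp
  · have h1 : ∑ ω ∈ s, p ω / fibreMass p u ω = (∑ ω ∈ s, p ω) / fibreMass p u c := by
      rw [Finset.sum_div]
      exact Finset.sum_congr rfl fun ω hω => by rw [fibreMass_congr (hs ω hω c hc)]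
    rw [h1]
    refine div_le_one_of_le₀ ?_ (fibreMass_nonneg hp0 u c)
    refine Finset.sum_le_sum_of_subset_of_nonneg (fun a ha => ?_) fun a _ _ => hp0 a
    simpa using hs a ha c hc

/-- The expectation of `P_f P_g / (P_u P_w)` is at most `1` when `(f, g)` determines `u` and each
of `f`, `g` determines `w`. Expanding `P_f(ω)` and `P_g(ω)` as sums over `a` and `b`, the sum over
`ω` runs inside a single fibre of `u`; what remains is the sum over `a` of `p a` times the total
conditional weight of the `w`-fibre through `a`. -/
theorem sum_ratio_le_one (hp0 : ∀ ω, 0 ≤ p ω) (hp1 : ∑ ω, p ω = 1)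
    {f : Ω → α} {g : Ω → β} {u : Ω → γ} {w : Ω → δ}
    (hu : ∀ a b, f a = f b → g a = g b → u a = u b)
    (hf : ∀ a b, f a = f b → w a = w b) (hg : ∀ a b, g a = g b → w a = w b) :
    ∑ ω, p ω * (fibreMass p f ω * fibreMass p g ω / (fibreMass p u ω * fibreMass p w ω)) ≤ 1 := by
  have hexp : ∀ ω, p ω * (fibreMass p f ω * fibreMass p g ω /
      (fibreMass p u ω * fibreMass p w ω)) =
      ∑ a, ∑ b, (if f a = f ω ∧ g b = g ω then
        p a * (p b / fibreMass p w b) * (p ω / fibreMass p u ω) else 0) := by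
    intro ω
    have h1 : ∀ a b, (if f a = f ω ∧ g b = g ω then
        p a * (p b / fibreMass p w b) * (p ω / fibreMass p u ω) else 0) =
        (if f a = f ω then p a else 0) * ((if g b = g ω then p b else 0) *
          (p ω / (fibreMass p u ω * fibreMass p w ω))) := by
      intro a b
      by_cases ha : f a = f ω <;> by_cases hb : g b = g ω <;> simp only [ha, hb, and_true,
        and_false, if_true, if_false, zero_mul, mul_zero]
      rw [fibreMass_congr (hg b ω hb)]
      simp only [div_eq_mul_inv, mul_inv]
      ring
    simp only [h1]
    rw [← Finset.sum_mul_sum, ← Finset.sum_mul, ← Finset.sum_filter, ← Finset.sum_filter]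
    change _ = fibreMass p f ω * (fibreMass p g ω * _)
    ring
  simp only [hexp]
  rw [Finset.sum_comm]
  rw [← hp1]
  refine Finset.sum_le_sum fun a _ => ?_
  rw [Finset.sum_comm]
  have hb : ∀ b, ∑ ω, (if f a = f ω ∧ g b = g ω then
        p a * (p b / fibreMass p w b) * (p ω / fibreMass p u ω) else 0) ≤
      if w b = w a then p a * (p b / fibreMass p w b) else 0 := by
    intro b
    have hnn : 0 ≤ p a * (p b / fibreMass p w b) :=
      mul_nonneg (hp0 a) (div_nonneg (hp0 b) (fibreMass_nonneg hp0 w b))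
    split_ifs with hw
    · rw [← Finset.sum_filter, ← Finset.mul_sum]
      refine mul_le_of_le_one_right hnn (sum_div_fibreMass_le_one hp0 u _ ?_)
      intro x hx y hy
      simp only [Finset.mem_filter, Finset.mem_univ, true_and] at hx hy
      exact hu x y (hx.1.symm.trans hy.1) (hx.2.symm.trans hy.2)
    · refine (Finset.sum_eq_zero fun ω _ => if_neg ?_).le
      rintro ⟨h1, h2⟩
      exact hw ((hg b ω h2).trans (hf a ω h1).symm)
  refine (Finset.sum_le_sum fun b _ => hb b).trans ?_
  rw [← Finset.sum_filter, ← Finset.mul_sum]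
  refine mul_le_of_le_one_right (hp0 a) (sum_div_fibreMass_le_one hp0 w _ ?_)
  intro x hx y hy
  simp only [Finset.mem_filter, Finset.mem_univ, true_and] at hx hy
  exact hx.trans hy.symm

/-- Submodularity of entropy, with `u` in the role of the join of `f` and `g` and `w` in the role
of their common part. -/
theorem entropy_submodular (hp0 : ∀ ω, 0 ≤ p ω) (hp1 : ∑ ω, p ω = 1)
    {f : Ω → α} {g : Ω → β} {u : Ω → γ} {w : Ω → δ}
    (hu : ∀ a b, f a = f b → g a = g b → u a = u b)
    (hf : ∀ a b, f a = f b → w a = w b) (hg : ∀ a b, g a = g b → w a = w b) :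
    entropy p u + entropy p w ≤ entropy p f + entropy p g := by
  have hlog : 0 < Real.log 2 := Real.log_pos (by norm_num)
  have key : ∑ ω, p ω * (Real.logb 2 (fibreMass p f ω) + Real.logb 2 (fibreMass p g ω)
      - Real.logb 2 (fibreMass p u ω) - Real.logb 2 (fibreMass p w ω)) ≤
      ∑ ω, (p ω * (fibreMass p f ω * fibreMass p g ω / (fibreMass p u ω * fibreMass p w ω))
        - p ω) / Real.log 2 := by
    refine Finset.sum_le_sum fun ω _ => ?_
    rcases (hp0 ω).eq_or_lt with h0 | h0
    · simp [← h0]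
    · have pf := h0.trans_le (le_fibreMass hp0 f ω)
      have pg := h0.trans_le (le_fibreMass hp0 g ω)
      have pu := h0.trans_le (le_fibreMass hp0 u ω)
      have pw := h0.trans_le (le_fibreMass hp0 w ω)
      have h1 := Real.log_le_sub_one_of_pos (div_pos (mul_pos pf pg) (mul_pos pu pw))
      rw [Real.log_div (mul_pos pf pg).ne' (mul_pos pu pw).ne', Real.log_mul pf.ne' pg.ne',
        Real.log_mul pu.ne' pw.ne'] at h1
      rw [le_div_iff₀ hlog]
      have h2 := mul_le_mul_of_nonneg_left h1 h0.le
      simp only [Real.logb]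
      calc _ = p ω * (Real.log (fibreMass p f ω) + Real.log (fibreMass p g ω)
            - (Real.log (fibreMass p u ω) + Real.log (fibreMass p w ω))) := by
              field_simp
              ring
        _ ≤ _ := h2
        _ = _ := by ring
  have hle : ∑ ω, (p ω * (fibreMass p f ω * fibreMass p g ω /
      (fibreMass p u ω * fibreMass p w ω)) - p ω) / Real.log 2 ≤ 0 := by
    rw [← Finset.sum_div, Finset.sum_sub_distrib, hp1]
    exact div_nonpos_of_nonpos_of_nonneg
      (sub_nonpos.mpr (sum_ratio_le_one hp0 hp1 hu hf hg)) hlog.le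
  have h := key.trans hle
  simp only [mul_sub, mul_add, Finset.sum_sub_distrib, Finset.sum_add_distrib] at h
  simp only [entropy_eq_sum]
  linarith

theorem entropy_eq_zero_of_const (hp1 : ∑ ω, p ω = 1) {f : Ω → α} (h : ∀ a b, f a = f b) :
    entropy p f = 0 := by
  have h1 : ∀ ω, fibreMass p f ω = 1 := fun ω => by
    rw [fibreMass, Finset.filter_true_of_mem fun a _ => h a ω, hp1]
  simp [entropy_eq_sum, h1]

end Fibres

section Shearer

variable {Ω ι V : Type*} [DecidableEq ι]

/-- The restriction `X_S` of the family `X` to the index set `S`, with `none` outside `S`. -/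
def restr (X : Ω → ι → V) (S : Finset ι) : Ω → ι → Option V :=
  fun ω i => if i ∈ S then some (X ω i) else none

theorem restr_eq_iff {X : Ω → ι → V} {S : Finset ι} {a b : Ω} :
    restr X S a = restr X S b ↔ ∀ i ∈ S, X a i = X b i := by
  constructor
  · intro h i hi
    have := congrFun h i
    simpa [restr, hi] using this
  · intro h
    funext i
    by_cases hi : i ∈ S
    · simp [restr, hi, h i hi]
    · simp [restr, hi]

variable [Fintype Ω] [Fintype ι] [DecidableEq V]

/-- Shearer's inequality for the subfamily `X_S`. -/
theorem shearer_restrict (p : Ω → ℝ) (hp0 : ∀ ω, 0 ≤ p ω) (hp1 : ∑ ω, p ω = 1)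
    (X : Ω → ι → V) (m : ℕ) (A : Fin m → Finset ι) (q : ℕ)
    (hcov : ∀ i : ι, q ≤ (Finset.univ.filter (fun j => i ∈ A j)).card) (S : Finset ι) :
    (q : ℝ) * entropy p (restr X S) ≤ ∑ j : Fin m, entropy p (restr X (A j ∩ S)) := by
  induction S using Finset.induction_on with
  | empty =>
    have h0 : entropy p (restr X ∅) = 0 :=
      entropy_eq_zero_of_const hp1 fun a b => restr_eq_iff.mpr (by simp)
    simp [h0]
  | insert i S hi ih =>
    set d := entropy p (restr X (insert i S)) - entropy p (restr X S) with hd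
    have hd0 : 0 ≤ d := sub_nonneg.mpr <| entropy_mono hp0 fun a b h =>
      restr_eq_iff.mpr fun k hk => restr_eq_iff.mp h k (Finset.mem_insert_of_mem hk)
    have hstep : ∀ j, entropy p (restr X (A j ∩ S)) + (if i ∈ A j then d else 0) ≤
        entropy p (restr X (A j ∩ insert i S)) := by
      intro j
      split_ifs with hj
      · rw [Finset.inter_insert_of_mem hj]
        have := entropy_submodular (p := p) (f := restr X S) (g := restr X (insert i (A j ∩ S)))
          (u := restr X (insert i S)) (w := restr X (A j ∩ S)) hp0 hp1
          (fun a b h1 h2 => by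
            rw [restr_eq_iff] at *
            intro k hk
            rcases Finset.mem_insert.mp hk with rfl | hk
            · exact h2 _ (Finset.mem_insert_self _ _)
            · exact h1 k hk)
          (fun a b h => restr_eq_iff.mpr fun k hk =>
            restr_eq_iff.mp h k (Finset.mem_inter.mp hk).2)
          (fun a b h => restr_eq_iff.mpr fun k hk =>
            restr_eq_iff.mp h k (Finset.mem_insert_of_mem hk))
        linarith
      · rw [Finset.inter_insert_of_notMem hj, add_zero]
    have hsum := Finset.sum_le_sum fun j (_ : j ∈ Finset.univ) => hstep j
    rw [Finset.sum_add_distrib, ← Finset.sum_filter, Finset.sum_const, nsmul_eq_mul] at hsum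
    have hq : (q : ℝ) * d ≤ ((Finset.univ.filter (fun j => i ∈ A j)).card : ℝ) * d :=
      mul_le_mul_of_nonneg_right (by exact_mod_cast hcov i) hd0
    have hexp : (q : ℝ) * entropy p (restr X (insert i S)) =
        q * entropy p (restr X S) + q * d := by
      rw [hd]
      ring
    linarith

end Shearer

theorem stmt4 {Ω ι V : Type*} [Fintype Ω] [Fintype ι] [DecidableEq ι] [DecidableEq V]
    (p : Ω → ℝ) (hp0 : ∀ ω, 0 ≤ p ω) (hp1 : ∑ ω, p ω = 1)
    (X : Ω → ι → V) (m : ℕ) (A : Fin m → Finset ι) (q : ℕ) (hq : 1 ≤ q)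
    (hcov : ∀ i : ι, q ≤ (Finset.univ.filter (fun j => i ∈ A j)).card) :
    (q : ℝ) * entropy p X ≤
      ∑ j : Fin m, entropy p (fun ω i => if i ∈ A j then some (X ω i) else none) := by
  have h := shearer_restrict p hp0 hp1 X m A q hcov Finset.univ
  simp only [Finset.inter_univ] at h
  -- `X_univ` determines `X`.
  have hX : entropy p X ≤ entropy p (restr X Finset.univ) := entropy_mono hp0 fun a b hab =>
    funext fun i => restr_eq_iff.mp hab i (Finset.mem_univ i)
  exact (mul_le_mul_of_nonneg_left hX (Nat.cast_nonneg q)).trans h
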